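/- Fix a prime power q and ε ∈ (0,1/2). There exist constants c, C > 0 (depending only on q and ε) and an integer N such that for all integers n ≥ N and all integers m with (1+ε)·(log n)/(log q) ≤ m ≤ (2−ε)·(log n)/(log q), one has c·n²/(m·q^{m}) ≤ log G_q(x_q) ≤ C·n²/(m·q^{m}). -/

import Mathlib

open Real

noncomputable section

/-- Predicate characterizing the Dickman function `ρ : [0,∞) → (0,∞)`:
continuous on `[0,∞)`, positive, equal to `1` on `[0,1]`, and satisfying the
delay differential equation `t·ρ'(t) + ρ(t-1) = 0` for `t > 1`. -/
def IsDickman (ρ : ℝ → ℝ) : Prop :=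
  ContinuousOn ρ (Set.Ici 0) ∧
  (∀ t : ℝ, 0 ≤ t → 0 < ρ t) ∧
  (∀ t ∈ Set.Icc (0:ℝ) 1, ρ t = 1) ∧
  (∀ t : ℝ, 1 < t → HasDerivAt ρ (-(ρ (t - 1)) / t) t)

/-- `ξ(u)`: for `u > 1`, the unique positive solution of `e^ξ = 1 + u·ξ`; otherwise `0`. -/
def xi (u : ℝ) : ℝ :=
  open Classical in
  if h : ∃ x : ℝ, 0 < x ∧ Real.exp x = 1 + u * x then h.choose else 0

/-- `p_{n,m}`: probability that a uniformly random permutation of `{1,…,n}` is `m`-friable,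
i.e. has no cycle of length greater than `m`. -/
def permProb (n m : ℕ) : ℝ :=
  (Nat.card {σ : Equiv.Perm (Fin n) // ∀ c ∈ σ.cycleType, c ≤ m} : ℝ) /
    (Nat.factorial n : ℝ)

/-- `p_{n,m,q}`: proportion of monic polynomials of degree `n` over a finite field `F`
(of cardinality `q`) that are `m`-friable, i.e. all of whose monic irreducible factors
have degree at most `m`. -/
def polyProb (F : Type) [Field F] [Fintype F] (n m : ℕ) : ℝ :=
  (Nat.card {f : Polynomial F // f.Monic ∧ f.natDegree = n ∧
      ∀ p : Polynomial F, p.Monic → Irreducible p → p ∣ f → p.natDegree ≤ m} : ℝ) /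
    (Fintype.card F : ℝ) ^ n

/-- `F_q(z) = ∏_{deg P ≤ m} (1 - (z/q)^{deg P})⁻¹`, the product over monic irreducible
polynomials `P` over `F` of degree at most `m`. -/
def FqFun (F : Type) [Field F] [Fintype F] (m : ℕ) (z : ℝ) : ℝ :=
  ∏ᶠ p ∈ {p : Polynomial F | p.Monic ∧ Irreducible p ∧ p.natDegree ≤ m},
    (1 - (z / (Fintype.card F : ℝ)) ^ p.natDegree)⁻¹

/-- `G_q(z) = F_q(z) · exp(-∑_{i=1}^m z^i/i)`. -/
def Gq (F : Type) [Field F] [Fintype F] (m : ℕ) (z : ℝ) : ℝ :=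
  FqFun F m z * Real.exp (-(∑ i ∈ Finset.Icc 1 m, z ^ i / (i : ℝ)))

/-- The coefficients `d_{m,i}`. -/
def dcoef (m i : ℕ) : ℝ :=
  if i = m then -(1 / (m : ℝ)) * ∑ j ∈ Finset.Icc 2 m, (1 : ℝ) / (j : ℝ)
  else Real.Gamma ((i : ℝ) + (i : ℝ) / (m : ℝ)) /
    (((m : ℝ) - (i : ℝ)) * (Nat.factorial i : ℝ) * Real.Gamma (1 + (i : ℝ) / (m : ℝ)))

/-- `T(s) = ∫₀^s ((e^t - 1)/t)·((t/m)/(1 - e^{-t/m}) - 1) dt`, integrand extended by `0` at `t = 0`. -/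
def Tfun (m : ℕ) (s : ℝ) : ℝ :=
  ∫ t in (0:ℝ)..s,
    if t = 0 then 0 else
      ((Real.exp t - 1) / t) * ((t / (m : ℝ)) / (1 - Real.exp (-t / (m : ℝ))) - 1)

end

section algebraPart

variable (F : Type) [Field F] [Fintype F]

theorem irrSet_finite (m : ℕ) :
    {p : Polynomial F | p.Monic ∧ Irreducible p ∧ p.natDegree ≤ m}.Finite := by
  have : Function.Injective
      (fun p : {p : Polynomial F | p.Monic ∧ Irreducible p ∧ p.natDegree ≤ m} =>
        fun i : Fin (m + 1) => (p : Polynomial F).coeff i) := by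
    rintro ⟨p, hp⟩ ⟨r, hr⟩ h
    simp only [Subtype.mk.injEq]
    ext i
    by_cases hi : i < m + 1
    · exact congrFun h ⟨i, hi⟩
    · rw [Polynomial.coeff_eq_zero_of_natDegree_lt, Polynomial.coeff_eq_zero_of_natDegree_lt]
      · have := hr.2.2
        omega
      · have := hp.2.2
        omega
  have := Finite.of_injective _ this
  exact Set.toFinite _

/-- the finite set of monic irreducible polynomials of degree at most `m` -/
noncomputable def irrS (m : ℕ) : Finset (Polynomial F) := (irrSet_finite F m).toFinset

theorem mem_irrS {m : ℕ} {p : Polynomial F} :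
    p ∈ irrS F m ↔ p.Monic ∧ Irreducible p ∧ p.natDegree ≤ m := by
  simp [irrS]

/-- sum of degrees of monic irreducibles of degree at most `m` and dividing `N` -/
noncomputable def acoef (m N : ℕ) : ℕ :=
  ∑ p ∈ (irrS F m).filter (fun p => p.natDegree ∣ N), p.natDegree

theorem acoef_eq {m N : ℕ} (hN : 1 ≤ N) (hNm : N ≤ m) :
    acoef F m N = Fintype.card F ^ N := by
  classical
  obtain ⟨p, hp⟩ := CharP.exists F
  have : Fact (Nat.Prime p) := ⟨CharP.char_is_prime F p⟩
  have : NeZero N := ⟨by omega⟩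
  let K := FiniteField.Extension F p N
  have : Fintype K := Fintype.ofFinite _
  have hcard : Fintype.card K = Fintype.card F ^ N := by
    rw [Fintype.card_eq_nat_card, FiniteField.natCard_extension, Fintype.card_eq_nat_card]
  have hmaps : ∀ a ∈ (Finset.univ : Finset K),
      minpoly F a ∈ (irrS F m).filter (fun p => p.natDegree ∣ N) := by
    intro a _
    have hi : IsIntegral F a := Algebra.IsIntegral.isIntegral a
    have hd := minpoly.degree_dvd hi
    rw [FiniteField.finrank_extension] at hd
    rw [Finset.mem_filter, mem_irrS]
    exact ⟨⟨minpoly.monic hi, minpoly.irreducible hi, (Nat.le_of_dvd hN hd).trans hNm⟩, hd⟩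
  have h := Finset.card_eq_sum_card_fiberwise hmaps
  rw [← hcard, ← Finset.card_univ, h, acoef]
  refine Finset.sum_congr rfl fun P hP => ?_
  rw [Finset.mem_filter, mem_irrS] at hP
  obtain ⟨⟨hmon, hirr, -⟩, hdvd⟩ := hP
  have hsplit : (P.map (algebraMap F K)).Splits := by
    refine Polynomial.Splits.of_dvd ?_ ?_
      (Polynomial.map_dvd (algebraMap F K) (hirr.natDegree_dvd_iff_dvd_X_pow_card_pow_sub_X.1 hdvd))
    · apply Polynomial.IsSplittingField.splits
    · exact Polynomial.map_ne_zero
        (FiniteField.X_pow_card_pow_sub_X_ne_zero _ (by omega) Finite.one_lt_card)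
  have hsep : P.Separable := PerfectField.separable_of_irreducible hirr
  rw [← Polynomial.card_rootSet_eq_natDegree (K := K) hsep hsplit, ← Set.toFinset_card]
  congr 1
  ext a
  simp only [Set.mem_toFinset, Finset.mem_filter, Finset.mem_univ, true_and]
  rw [Polynomial.mem_rootSet_of_ne hmon.ne_zero]
  constructor
  · intro h
    exact (minpoly.eq_of_irreducible_of_monic hirr h hmon).symm
  · rintro rfl
    exact minpoly.aeval _ _

theorem deg_sum_le {m d : ℕ} (hd : 1 ≤ d) (hdm : d ≤ m) :
    ∑ p ∈ (irrS F m).filter (fun p => p.natDegree = d), p.natDegree ≤ Fintype.card F ^ d := by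
  rw [← acoef_eq F hd hdm, acoef]
  refine Finset.sum_le_sum_of_subset fun p hp => ?_
  rw [Finset.mem_filter] at hp ⊢
  exact ⟨hp.1, hp.2 ▸ dvd_rfl⟩

theorem geom_aux (q D : ℕ) (hq : 2 ≤ q) : ∑ d ∈ Finset.Icc 1 D, q ^ d ≤ 2 * q ^ D := by
  induction D with
  | zero => simp
  | succ D ih =>
    rw [Finset.sum_Icc_succ_top (by omega), pow_succ]
    nlinarith [Nat.zero_le (q ^ D)]

theorem acoef_le {m N D : ℕ} (hD : D ≤ m) (h : ∀ d, d ∣ N → d ≤ m → d ≤ D) :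
    acoef F m N ≤ 2 * Fintype.card F ^ D := by
  have hq : 2 ≤ Fintype.card F := Fintype.one_lt_card
  refine le_trans ?_ (geom_aux _ D hq)
  have hmaps : ∀ p ∈ (irrS F m).filter (fun p => p.natDegree ∣ N),
      p.natDegree ∈ Finset.Icc 1 D := by
    intro p hp
    rw [Finset.mem_filter, mem_irrS] at hp
    rw [Finset.mem_Icc]
    exact ⟨hp.1.2.1.natDegree_pos, h _ hp.2 hp.1.2.2⟩
  rw [acoef, ← Finset.sum_fiberwise_of_maps_to hmaps]
  refine Finset.sum_le_sum fun d hd => ?_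
  rw [Finset.mem_Icc] at hd
  refine le_trans ?_ (deg_sum_le F hd.1 (hd.2.trans hD))
  refine Finset.sum_le_sum_of_subset fun p hp => ?_
  rw [Finset.mem_filter, Finset.mem_filter] at hp
  rw [Finset.mem_filter]
  exact ⟨hp.1.1, hp.2⟩

theorem acoef_le_m {m N : ℕ} : acoef F m N ≤ 2 * Fintype.card F ^ m :=
  acoef_le F le_rfl fun _ _ h => h

theorem acoef_le_half {m N : ℕ} (hm : m < N) (hN : N ≤ 2 * m) :
    acoef F m N ≤ 2 * Fintype.card F ^ (N / 2) := by
  refine acoef_le F (by omega) fun d ⟨k, hk⟩ hd => ?_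
  have : 2 ≤ k := by
    by_contra hlt
    have : k = 0 ∨ k = 1 := by omega
    rcases this with rfl | rfl <;> omega
  rw [Nat.le_div_iff_mul_le two_pos]
  nlinarith

theorem acoef_two_mul {m : ℕ} (hm : 1 ≤ m) : Fintype.card F ^ m ≤ acoef F m (2 * m) := by
  rw [← acoef_eq F hm le_rfl, acoef, acoef]
  refine Finset.sum_le_sum_of_subset fun p hp => ?_
  rw [Finset.mem_filter] at hp ⊢
  exact ⟨hp.1, hp.2.mul_left 2⟩

end algebraPart

section seriesPart

theorem hasSum_log_aux {d : ℕ} (hd : 1 ≤ d) {t : ℝ} (h0 : 0 ≤ t) (h1 : t < 1) :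
    HasSum (fun N : ℕ => (if d ∣ N then (d : ℝ) else 0) * t ^ N / N) (-Real.log (1 - t ^ d)) := by
  have hlt : |t ^ d| < 1 := by
    rw [abs_of_nonneg (by positivity)]
    exact pow_lt_one₀ h0 h1 (by omega)
  have h := Real.hasSum_pow_div_log_of_abs_lt_one hlt
  have hinj : Function.Injective (fun k : ℕ => d * (k + 1)) := by
    intro a b hab
    have := Nat.eq_of_mul_eq_mul_left (by omega) hab
    omega
  rw [← hinj.hasSum_iff]
  · convert! h using 2 with k
    have : (d : ℝ) ≠ 0 := by positivity
    simp only [Function.comp, dvd_mul_right, if_true]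
    push_cast
    rw [pow_mul]
    field_simp
  · intro N hN
    by_cases hdv : d ∣ N
    · obtain ⟨k, rfl⟩ := hdv
      rcases k with _ | k
      · simp
      · exact absurd ⟨k, rfl⟩ hN
    · simp [hdv]

theorem hasSum_geo_aux {d : ℕ} (hd : 1 ≤ d) {t : ℝ} (h0 : 0 ≤ t) (h1 : t < 1) :
    HasSum (fun N : ℕ => if N = 0 then 0 else (if d ∣ N then (d : ℝ) else 0) * t ^ N)
      (d * t ^ d / (1 - t ^ d)) := by
  have hlt : t ^ d < 1 := pow_lt_one₀ h0 h1 (by omega)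
  have h := (hasSum_geometric_of_lt_one (by positivity) hlt).mul_left (d * t ^ d)
  rw [← div_eq_mul_inv] at h
  have hinj : Function.Injective (fun k : ℕ => d * (k + 1)) := by
    intro a b hab
    have := Nat.eq_of_mul_eq_mul_left (by omega) hab
    omega
  rw [← hinj.hasSum_iff]
  · convert! h using 2 with k
    have : d * (k + 1) ≠ 0 := by positivity
    simp only [Function.comp, dvd_mul_right, if_true, this, if_false]
    rw [pow_mul, pow_succ]
    ring
  · intro N hN
    by_cases hdv : d ∣ N
    · obtain ⟨k, rfl⟩ := hdv
      rcases k with _ | k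
      · simp
      · exact absurd ⟨k, rfl⟩ hN
    · simp [hdv]

variable (F : Type) [Field F] [Fintype F]

theorem FqFun_eq (m : ℕ) (z : ℝ) :
    FqFun F m z = ∏ p ∈ irrS F m, (1 - (z / (Fintype.card F : ℝ)) ^ p.natDegree)⁻¹ := by
  rw [FqFun, finprod_mem_eq_finite_toFinset_prod _ (irrSet_finite F m)]
  rfl

theorem acoef_cast (m N : ℕ) :
    (acoef F m N : ℝ) = ∑ p ∈ irrS F m, (if p.natDegree ∣ N then (p.natDegree : ℝ) else 0) := by
  rw [acoef, Nat.cast_sum, Finset.sum_filter]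

theorem factor_pos {m : ℕ} {p : Polynomial F} (hp : p ∈ irrS F m) {t : ℝ} (h0 : 0 ≤ t)
    (h1 : t < 1) : 0 < 1 - t ^ p.natDegree := by
  rw [mem_irrS] at hp
  have := pow_lt_one₀ h0 h1 hp.2.1.natDegree_pos.ne'
  linarith

theorem hasSum_log_F (m : ℕ) {x t : ℝ} (ht : t = x / (Fintype.card F : ℝ)) (h0 : 0 ≤ t)
    (h1 : t < 1) :
    HasSum (fun N : ℕ => (acoef F m N : ℝ) * t ^ N / N) (Real.log (FqFun F m x)) := by
  rw [FqFun_eq, Real.log_prod, ← ht]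
  · simp_rw [acoef_cast, Finset.sum_mul, Finset.sum_div]
    refine hasSum_sum fun p hp => ?_
    rw [Real.log_inv]
    rw [mem_irrS] at hp
    exact hasSum_log_aux hp.2.1.natDegree_pos h0 h1
  · intro p hp
    rw [← ht]
    exact inv_ne_zero (factor_pos F hp h0 h1).ne'

theorem hasSum_deriv_F (m : ℕ) {x t : ℝ} (ht : t = x / (Fintype.card F : ℝ)) (h0 : 0 ≤ t)
    (h1 : t < 1) :
    HasSum (fun N : ℕ => if N = 0 then 0 else (acoef F m N : ℝ) * t ^ N)
      (x * deriv (FqFun F m) x / FqFun F m x) := by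
  have hq : (0 : ℝ) < Fintype.card F := by exact_mod_cast Fintype.card_pos
  have hd : ∀ p ∈ irrS F m,
      HasDerivAt (fun z : ℝ => (1 - (z / (Fintype.card F : ℝ)) ^ p.natDegree)⁻¹)
        ((p.natDegree * t ^ (p.natDegree - 1) / Fintype.card F) / (1 - t ^ p.natDegree) ^ 2) x := by
    intro p hp
    have h := ((((hasDerivAt_id x).div_const (Fintype.card F : ℝ)).pow p.natDegree).const_sub
      1).inv (by simpa [← ht] using (factor_pos F hp h0 h1).ne')
    convert! h using 1
    simp [← ht]
    ring
  have hfun : FqFun F m =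
      fun z => ∏ p ∈ irrS F m, (1 - (z / (Fintype.card F : ℝ)) ^ p.natDegree)⁻¹ :=
    funext (FqFun_eq F m)
  have hlog : x * deriv (FqFun F m) x / FqFun F m x = x * logDeriv (FqFun F m) x := by
    rw [logDeriv_apply]
    ring
  rw [hlog, hfun, logDeriv_prod, Finset.mul_sum]
  · have : ∀ N : ℕ, (if N = 0 then 0 else (acoef F m N : ℝ) * t ^ N) =
        ∑ p ∈ irrS F m,
          if N = 0 then 0 else (if p.natDegree ∣ N then (p.natDegree : ℝ) else 0) * t ^ N := by
      intro N
      split_ifs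
      · simp
      · rw [acoef_cast, Finset.sum_mul]
    simp_rw [this]
    refine hasSum_sum fun p hp => ?_
    have hpos := factor_pos F hp h0 h1
    have hp' := (mem_irrS F).1 hp
    have hdeg := hp'.2.1.natDegree_pos
    convert! hasSum_geo_aux hdeg h0 h1 using 1
    rw [logDeriv_apply, (hd p hp).deriv, ← ht]
    have hx : x = t * Fintype.card F := by rw [ht]; field_simp
    obtain ⟨k, hk⟩ : ∃ k, p.natDegree = k + 1 := ⟨p.natDegree - 1, by omega⟩
    rw [hk] at hpos ⊢
    rw [hx, Nat.add_sub_cancel, pow_succ t k]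
    rw [pow_succ t k] at hpos
    field_simp
  · intro p hp
    rw [← ht]
    exact inv_ne_zero (factor_pos F hp h0 h1).ne'
  · intro p hp
    exact (hd p hp).differentiableAt

theorem range_to_Icc (m : ℕ) (f : ℕ → ℝ) (hf : f 0 = 0) :
    ∑ i ∈ Finset.range (m + 1), f i = ∑ i ∈ Finset.Icc 1 m, f i := by
  rw [Finset.sum_range_succ', hf, add_zero, Finset.range_eq_Ico, Finset.sum_Ico_add' f 0 m 1]
  rfl

theorem hasSum_tail_log (m : ℕ) {x t : ℝ} (ht : t = x / (Fintype.card F : ℝ)) (h0 : 0 ≤ t)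
    (h1 : t < 1) :
    HasSum (fun j : ℕ => (acoef F m (j + (m + 1)) : ℝ) * t ^ (j + (m + 1)) / ((j + (m + 1) : ℕ) : ℝ))
      (Real.log (Gq F m x)) := by
  have hq : (0 : ℝ) < Fintype.card F := by exact_mod_cast Fintype.card_pos
  have h := (hasSum_nat_add_iff' (m + 1)).2 (hasSum_log_F F m ht h0 h1)
  convert! h using 1
  have hne : FqFun F m x ≠ 0 := by
    rw [FqFun_eq, Finset.prod_ne_zero_iff]
    intro p hp
    rw [← ht]
    exact inv_ne_zero (factor_pos F hp h0 h1).ne'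
  rw [Gq, Real.log_mul hne (Real.exp_ne_zero _), Real.log_exp, range_to_Icc _ _ (by simp),
    ← sub_eq_add_neg]
  congr 1
  refine Finset.sum_congr rfl fun i hi => ?_
  rw [Finset.mem_Icc] at hi
  rw [acoef_eq F hi.1 hi.2, ht, Nat.cast_pow, ← mul_pow]
  congr 2
  field_simp

theorem hasSum_tail_deriv (m : ℕ) {x t : ℝ} (ht : t = x / (Fintype.card F : ℝ)) (h0 : 0 ≤ t)
    (h1 : t < 1) :
    HasSum (fun j : ℕ => (acoef F m (j + (m + 1)) : ℝ) * t ^ (j + (m + 1)))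
      (x * deriv (FqFun F m) x / FqFun F m x - ∑ i ∈ Finset.Icc 1 m, x ^ i) := by
  have hq : (0 : ℝ) < Fintype.card F := by exact_mod_cast Fintype.card_pos
  have h := (hasSum_nat_add_iff' (m + 1)).2 (hasSum_deriv_F F m ht h0 h1)
  convert! h using 1
  rw [range_to_Icc _ _ (by simp)]
  congr 1
  refine Finset.sum_congr rfl fun i hi => ?_
  rw [Finset.mem_Icc] at hi
  rw [acoef_eq F hi.1 hi.2, ht, Nat.cast_pow, ← mul_pow, if_neg (by omega)]
  congr 1
  field_simp

end seriesPart

section analysisPart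

theorem geo_le {Y w : ℝ} (hY : 1 < Y) (hw : Y ≤ w) (m : ℕ) :
    ∑ j ∈ Finset.range m, w ^ (j + 1) ≤ Y / (Y - 1) * w ^ m := by
  have hY' : 0 < Y - 1 := by linarith
  induction m with
  | zero => simp; positivity
  | succ m ih =>
    rw [Finset.sum_range_succ]
    have h1 : Y / (Y - 1) + w ≤ Y / (Y - 1) * w := by
      rw [div_add' _ _ _ hY'.ne', div_mul_eq_mul_div, div_le_div_iff_of_pos_right hY']
      nlinarith
    have hw0 : 0 ≤ w := by linarith
    have h2 : (0:ℝ) ≤ w ^ m := by positivity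
    calc _ ≤ Y / (Y - 1) * w ^ m + w ^ (m + 1) := by linarith
      _ = w ^ m * (Y / (Y - 1) + w) := by ring
      _ ≤ w ^ m * (Y / (Y - 1) * w) := by gcongr
      _ = _ := by ring

theorem Icc_to_range (m : ℕ) (f : ℕ → ℝ) :
    ∑ i ∈ Finset.Icc 1 m, f i = ∑ j ∈ Finset.range m, f (j + 1) := by
  rw [Finset.range_eq_Ico, Finset.sum_Ico_add' f 0 m 1]
  rfl

variable (F : Type) [Field F] [Fintype F]

theorem tail_le {s t w W τ R : ℝ} {m : ℕ} (hs : 1 ≤ s) (hsq : s ^ 2 = Fintype.card F)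
    (h0 : 0 ≤ t) (htτ : t ≤ τ) (hτ : τ < 1) (hw : w = s * t) (hW : 1 < W) (hWw : W ≤ w)
    (hR : HasSum (fun j : ℕ => (acoef F m (j + (m + 1)) : ℝ) * t ^ (j + (m + 1))) R) :
    R ≤ 2 * (W / (W - 1) + 1 / (1 - τ)) * w ^ (2 * m) := by
  have h1 : t < 1 := htτ.trans_lt hτ
  have hw0 : 0 ≤ w := by linarith
  rw [← hR.tsum_eq, ← hR.summable.sum_add_tsum_nat_add m, mul_add, add_mul]
  refine add_le_add ?_ ?_
  · calc _ ≤ ∑ j ∈ Finset.range m, 2 * w ^ m * w ^ (j + 1) := by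
          refine Finset.sum_le_sum fun j hj => ?_
          rw [Finset.mem_range] at hj
          have hA := acoef_le_half F (m := m) (N := j + (m + 1)) (by omega) (by omega)
          have hA' : (acoef F m (j + (m + 1)) : ℝ) ≤ 2 * s ^ (j + (m + 1)) := by
            calc (acoef F m (j + (m + 1)) : ℝ)
                ≤ 2 * (Fintype.card F : ℝ) ^ ((j + (m + 1)) / 2) := by exact_mod_cast hA
              _ = 2 * s ^ (2 * ((j + (m + 1)) / 2)) := by rw [← hsq, pow_mul]
              _ ≤ 2 * s ^ (j + (m + 1)) := by
                gcongr
                omega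
          calc _ ≤ 2 * s ^ (j + (m + 1)) * t ^ (j + (m + 1)) := by gcongr
            _ = _ := by rw [hw]; ring
      _ = 2 * w ^ m * ∑ j ∈ Finset.range m, w ^ (j + 1) := by rw [Finset.mul_sum]
      _ ≤ 2 * w ^ m * (W / (W - 1) * w ^ m) := by gcongr; exact geo_le hW hWw m
      _ = _ := by rw [two_mul m, pow_add]; ring
  · have hg := (hasSum_geometric_of_lt_one h0 h1).mul_left (2 * w ^ (2 * m))
    have hs' := (summable_nat_add_iff m).2 hR.summable
    calc _ ≤ 2 * w ^ (2 * m) * (1 - t)⁻¹ := by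
          rw [← hg.tsum_eq]
          refine hs'.tsum_le_tsum (fun j => ?_) hg.summable
          have hA := acoef_le_m F (m := m) (N := j + m + (m + 1))
          have hA' : (acoef F m (j + m + (m + 1)) : ℝ) ≤ 2 * s ^ (2 * m) := by
            rw [pow_mul, hsq]
            exact_mod_cast hA
          calc _ ≤ 2 * s ^ (2 * m) * t ^ (j + m + (m + 1)) := by gcongr
            _ = 2 * w ^ (2 * m) * t ^ j * t := by rw [hw]; ring
            _ ≤ 2 * w ^ (2 * m) * t ^ j * 1 := by gcongr
            _ = _ := by ring
      _ ≤ 2 * w ^ (2 * m) * (1 - τ)⁻¹ := by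
          have : 0 < 1 - τ := by linarith
          gcongr
      _ = _ := by ring

end analysisPart

set_option maxHeartbeats 4000000


/-- Fix a prime power `q` (the cardinality of a finite field `F`) and
`ε ∈ (0,1/2)`. There exist `c, C > 0` and `N` such that for all `n ≥ N` and
`(1+ε)·log_q n ≤ m ≤ (2−ε)·log_q n`, one has
`c·n²/(m·q^m) ≤ log G_q(x_q) ≤ C·n²/(m·q^m)`. -/
theorem stmt14 :
    ∀ (F : Type) [Field F] [Fintype F], ∀ ε : ℝ, 0 < ε → ε < 1 / 2 →
      ∃ c C : ℝ, 0 < c ∧ 0 < C ∧ ∃ N : ℕ, ∀ n : ℕ, N ≤ n → ∀ m : ℕ,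
      (1 + ε) * Real.log n / Real.log (Fintype.card F) ≤ (m : ℝ) →
      (m : ℝ) ≤ (2 - ε) * Real.log n / Real.log (Fintype.card F) →
      ∀ xq : ℝ, 0 < xq → xq < (Fintype.card F : ℝ) →
      xq * deriv (FqFun F m) xq / FqFun F m xq = (n : ℝ) →
      c * (n : ℝ) ^ 2 / ((m : ℝ) * (Fintype.card F : ℝ) ^ m) ≤ Real.log (Gq F m xq) ∧
        Real.log (Gq F m xq) ≤ C * (n : ℝ) ^ 2 / ((m : ℝ) * (Fintype.card F : ℝ) ^ m) := by
  intro F _ _ ε hε hε2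
  have hq2 : (2 : ℝ) ≤ Fintype.card F := by
    have : 2 ≤ Fintype.card F := Fintype.one_lt_card
    exact_mod_cast this
  set q : ℝ := (Fintype.card F : ℝ) with hqdef
  have hq0 : 0 < q := by linarith
  set L := Real.log q with hL
  have hLpos : 0 < L := Real.log_pos (by linarith)
  have hexpL : Real.exp L = q := Real.exp_log hq0
  -- constants
  obtain ⟨s, hsdef⟩ : ∃ s, s = Real.exp (L / 2) := ⟨_, rfl⟩
  obtain ⟨y, hydef⟩ : ∃ y, y = Real.exp (L * (1 / 2 + ε / 8)) := ⟨_, rfl⟩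
  obtain ⟨W, hWdef⟩ : ∃ W, W = Real.exp (L * (ε / 8)) := ⟨_, rfl⟩
  obtain ⟨T, hTdef⟩ : ∃ T, T = Real.exp (L / (1 + ε)) := ⟨_, rfl⟩
  have hs0 : 0 < s := hsdef ▸ Real.exp_pos _
  have hs1 : 1 ≤ s := by rw [hsdef]; exact Real.one_le_exp (by positivity)
  have hsq : s ^ 2 = q := by
    rw [hsdef, ← Real.exp_nat_mul, ← hexpL]
    congr 1
    push_cast
    ring
  have hW1 : 1 < W := by rw [hWdef]; exact Real.one_lt_exp_iff.2 (by positivity)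
  have hyW : y = s * W := by rw [hydef, hsdef, hWdef, ← Real.exp_add]; congr 1; ring
  have hy1 : 1 < y := by rw [hydef]; exact Real.one_lt_exp_iff.2 (by positivity)
  have hy0 : 0 < y := by linarith
  have hyq : y < q := by
    rw [hydef, ← hexpL]
    apply Real.exp_lt_exp.2
    nlinarith
  have hTq : T < q := by
    rw [hTdef, ← hexpL]
    apply Real.exp_lt_exp.2
    rw [div_lt_iff₀ (by linarith)]
    nlinarith
  have hτ1 : T / q < 1 := (div_lt_one hq0).2 hTq
  have hyq1 : y / q < 1 := (div_lt_one hq0).2 hyq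
  obtain ⟨K, hK⟩ : ∃ K, K = 2 * (W / (W - 1) + 1 / (1 - T / q)) := ⟨_, rfl⟩
  obtain ⟨K0, hK0⟩ : ∃ K0, K0 = 2 * (W / (W - 1) + 1 / (1 - y / q)) := ⟨_, rfl⟩
  have hKpos : 0 < K := by
    rw [hK]
    have h1 : 0 < W - 1 := by linarith
    have h2 : 0 < 1 - T / q := by linarith
    positivity
  have hK0pos : 0 < K0 := by
    rw [hK0]
    have h1 : 0 < W - 1 := by linarith
    have h2 : 0 < 1 - y / q := by linarith
    positivity
  obtain ⟨K', hK'⟩ : ∃ K', K' = y / (y - 1) + K := ⟨_, rfl⟩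
  have hK'pos : 0 < K' := by
    rw [hK']
    have h1 : 0 < y - 1 := by linarith
    positivity
  have hev : ∀ᶠ n : ℕ in Filter.atTop,
      2 / L * Real.log (n : ℝ) + K0 < (n : ℝ) ^ (ε / 4) := by
    have h1 : ∀ᶠ z : ℝ in Filter.atTop, 2 / L * Real.log z + K0 < z ^ (ε / 4) := by
      have ha := (isLittleO_log_rpow_atTop (r := ε / 4) (by positivity)).bound
        (c := L / 8) (by positivity)
      have hb := (tendsto_rpow_atTop (y := ε / 4) (by positivity)).eventually_gt_atTop (2 * K0)
      filter_upwards [ha, hb, Filter.eventually_gt_atTop 0] with z hz1 hz2 hz0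
      rw [Real.norm_eq_abs, Real.norm_eq_abs, abs_of_nonneg (Real.rpow_nonneg hz0.le _)] at hz1
      have h3 := (le_abs_self _).trans hz1
      have h4 : 2 / L * Real.log z ≤ 2 / L * (L / 8 * z ^ (ε / 4)) := by gcongr
      have h5 : 2 / L * (L / 8 * z ^ (ε / 4)) = z ^ (ε / 4) / 4 := by field_simp; norm_num
      linarith
    exact tendsto_natCast_atTop_atTop.eventually h1
  obtain ⟨N, hN⟩ := Filter.eventually_atTop.1 hev
  refine ⟨1 / (2 * K' ^ 2), K, by positivity, hKpos, max N 2, ?_⟩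
  intro n hn m hm1 hm2 x hx0 hxq hx
  have hnN : N ≤ n := (le_max_left _ _).trans hn
  have hn2 : 2 ≤ n := (le_max_right _ _).trans hn
  have hn2' : (2 : ℝ) ≤ n := by exact_mod_cast hn2
  have hn0 : (0 : ℝ) < n := by linarith
  have hlogn : 0 < Real.log n := Real.log_pos (by linarith)
  rw [div_le_iff₀ hLpos] at hm1
  rw [le_div_iff₀ hLpos] at hm2
  have hm0 : (0 : ℝ) < m := by
    have : 0 < (m : ℝ) * L := lt_of_lt_of_le (by positivity) hm1
    exact pos_of_mul_pos_left this hLpos.le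
  have hm : 1 ≤ m := by exact_mod_cast hm0
  have ht0 : 0 ≤ x / q := by positivity
  have ht1 : x / q < 1 := (div_lt_one hq0).2 hxq
  have hR := hasSum_tail_deriv F m (x := x) rfl ht0 ht1
  have hG := hasSum_tail_log F m (x := x) rfl ht0 ht1
  rw [hx] at hR
  set R := (n : ℝ) - ∑ i ∈ Finset.Icc 1 m, x ^ i with hRdef
  have hR0 : 0 ≤ R := hR.nonneg fun j => by positivity
  -- x ^ m ≤ n
  have hxm : x ^ m ≤ n := by
    have := Finset.single_le_sum (f := fun i => x ^ i) (s := Finset.Icc 1 m)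
      (fun i _ => by positivity) (Finset.mem_Icc.2 ⟨hm, le_rfl⟩)
    linarith
  have hxT : x ≤ T := by
    rw [hTdef, ← Real.log_le_iff_le_exp hx0, le_div_iff₀ (by linarith)]
    have h1 := Real.log_le_log (by positivity) hxm
    rw [Real.log_pow] at h1
    have h2 : (m : ℝ) * (Real.log x * (1 + ε)) ≤ m * L := by nlinarith
    exact le_of_mul_le_mul_left h2 hm0
  -- lower bound for x
  have hyx : y ≤ x := by
    by_contra! hlt
    have hym : y ^ m ≤ (n : ℝ) ^ (1 - ε / 4) := by
      rw [hydef, ← Real.exp_nat_mul, Real.rpow_def_of_pos hn0]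
      apply Real.exp_le_exp.2
      nlinarith [mul_nonneg (mul_nonneg hε.le hε.le) hlogn.le,
        mul_le_mul_of_nonneg_right hm2 (show 0 ≤ 1 / 2 + ε / 8 by positivity)]
    have hRy := hasSum_tail_deriv F m (x := y) rfl (by positivity) hyq1
    have hle : R ≤ _ := hasSum_le (fun j => by gcongr) hR hRy
    have hW2 : W = s * (y / q) := by
      rw [hyW, ← hsq]
      field_simp
    have hle2 := tail_le F hs1 hsq (by positivity) le_rfl hyq1 hW2 hW1 le_rfl hRy
    rw [← hK0] at hle2
    have hWm : W ^ (2 * m) ≤ y ^ m := by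
      have : W ^ 2 ≤ y := by
        rw [hW2, mul_pow, hsq]
        have : q * (y / q) ^ 2 = y * (y / q) := by field_simp
        rw [this]
        nlinarith
      rw [pow_mul]
      gcongr
    have hsum : ∑ i ∈ Finset.Icc 1 m, x ^ i ≤ m * y ^ m := by
      calc _ ≤ ∑ i ∈ Finset.Icc 1 m, y ^ m := by
            refine Finset.sum_le_sum fun i hi => ?_
            rw [Finset.mem_Icc] at hi
            calc x ^ i ≤ y ^ i := by gcongr
              _ ≤ y ^ m := pow_le_pow_right₀ hy1.le hi.2
        _ = _ := by simp
    have hKW : K0 * W ^ (2 * m) ≤ K0 * y ^ m := by gcongr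
    have h1 : (n : ℝ) ≤ (m + K0) * y ^ m := by
      have := hle.trans hle2
      rw [hRdef] at this
      linarith
    have hmL : (m : ℝ) ≤ 2 / L * Real.log n := by
      rw [div_mul_eq_mul_div, le_div_iff₀ hLpos]
      nlinarith
    have h2 : (n : ℝ) < (n : ℝ) ^ (ε / 4) * (n : ℝ) ^ (1 - ε / 4) := by
      have := hN n hnN
      calc (n : ℝ) ≤ (m + K0) * y ^ m := h1
        _ < (n : ℝ) ^ (ε / 4) * y ^ m := by
          have : (m : ℝ) + K0 < (n : ℝ) ^ (ε / 4) := by linarith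
          gcongr
        _ ≤ _ := by gcongr
    rw [← Real.rpow_add hn0] at h2
    simp at h2
  -- main estimates
  have hWw : W ≤ s * (x / q) := by
    have : s * (x / q) = x / s := by rw [← hsq]; field_simp
    rw [this, le_div_iff₀ hs0, mul_comm, ← hyW]
    exact hyx
  have htail := tail_le F hs1 hsq ht0 (by gcongr : x / q ≤ T / q) hτ1 rfl hW1 hWw hR
  rw [← hK] at htail
  have hM : (s * (x / q)) ^ (2 * m) = (x ^ m) ^ 2 / q ^ m := by
    rw [mul_pow, pow_mul s, hsq, div_pow, mul_comm 2 m, pow_mul x, pow_mul q]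
    field_simp
  rw [hM] at htail
  have hnx : (n : ℝ) ≤ K' * x ^ m := by
    have h1 := geo_le hy1 hyx m
    rw [← Icc_to_range m (fun i => x ^ i)] at h1
    have h2 : (x ^ m) ^ 2 / q ^ m ≤ x ^ m := by
      rw [div_le_iff₀ (by positivity), sq]
      gcongr
    have h3 : K * ((x ^ m) ^ 2 / q ^ m) ≤ K * x ^ m := by gcongr
    rw [hK', add_mul]
    have : R ≤ K * x ^ m := htail.trans h3
    linarith
  constructor
  · have hterm := le_hasSum hG (m - 1) (fun j _ => by positivity)
    refine le_trans ?_ hterm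
    have hidx : m - 1 + (m + 1) = 2 * m := by omega
    rw [hidx]
    have hA : q ^ m ≤ (acoef F m (2 * m) : ℝ) := by
      rw [hqdef]
      exact_mod_cast acoef_two_mul F hm
    calc 1 / (2 * K' ^ 2) * (n : ℝ) ^ 2 / (m * q ^ m)
        ≤ 1 / (2 * K' ^ 2) * (K' * x ^ m) ^ 2 / (m * q ^ m) := by gcongr
      _ = q ^ m * (x / q) ^ (2 * m) / ((2 * m : ℕ) : ℝ) := by
        rw [div_pow, mul_comm 2 m, pow_mul x, pow_mul q]
        push_cast
        field_simp
      _ ≤ _ := by gcongr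
  · have hle : Real.log (Gq F m x) ≤ R * (1 / m) := by
      refine hasSum_le (fun j => ?_) hG (hR.mul_right (1 / (m : ℝ)))
      rw [mul_one_div]
      gcongr
      omega
    calc _ ≤ R * (1 / m) := hle
      _ ≤ (K * ((x ^ m) ^ 2 / q ^ m)) * (1 / m) := by gcongr
      _ ≤ (K * ((n : ℝ) ^ 2 / q ^ m)) * (1 / m) := by gcongr
      _ = _ := by field_simp
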